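/- arXiv:2412.18803 — 2 statements merged into one kernel-verified Lean document; each statement's English description precedes it below -/
import Mathlib

section
/- Global double robustness of the one-step relative error estimator (Theorem 2(d)): if either ẽ(X) = e(X) almost surely, or both μ̃₀(X) = μ₀(X) and μ̃₁(X) = μ₁(X) almost surely, then for any bounded measurable τ̂₁, τ̂₂ : 𝒳 → ℝ, E[τ̂₁(X)² − τ̂₂(X)² − 2(τ̂₁(X) − τ̂₂(X))·Γ̃] = δ(τ̂₁, τ̂₂); that is, the one-step relative error estimator is unbiased even if the other nuisance estimator is arbitrary (possibly inconsistent). -/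
open MeasureTheory ProbabilityTheory

/-!
Given `X`, the augmented outcome of one arm, `D (Y - ν) / q + ν`, has conditional mean
`(p / q) (μ - ν) + ν`, where `p` is the true propensity and `μ` the true outcome regression of that
arm. It differs from `μ` by `(p / q - 1) (μ - ν)`, a product of the two nuisance errors, so it
equals `μ` as soon as one of them vanishes. Hence the pseudo-outcome `Γ̃` has conditional mean
`τ(X)`. Expanding the square, `φ(f) = E[f² - 2 f Γ̃] + E[τ²]` for every square-integrable function
`f` of `X`, and the last term, being free of `f`, cancels in the relative error.
-/

section SquaredError

variable {Ω : Type*} {m mΩ : MeasurableSpace Ω} {P : Measure Ω} {f g Γ τ : Ω → ℝ}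

lemma integral_mul_condExp_of_aestronglyMeasurable (hm : m ≤ mΩ) [SigmaFinite (P.trim hm)]
    (hf : AEStronglyMeasurable[m] f P) (hfΓ : Integrable (f * Γ) P) (hΓ : Integrable Γ P) :
    ∫ ω, f ω * P[Γ | m] ω ∂P = ∫ ω, f ω * Γ ω ∂P :=
  calc ∫ ω, f ω * P[Γ | m] ω ∂P
      = ∫ ω, P[f * Γ | m] ω ∂P :=
        integral_congr_ae (condExp_mul_of_aestronglyMeasurable_left hf hfΓ hΓ).symm
    _ = ∫ ω, f ω * Γ ω ∂P := integral_condExp hm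

variable [IsFiniteMeasure P]

lemma integral_sub_sq_eq_of_condExp_ae_eq (hm : m ≤ mΩ) (hfm : AEStronglyMeasurable[m] f P)
    (hf : MemLp f 2 P) (hΓ : MemLp Γ 2 P) (hτ : P[Γ | m] =ᵐ[P] τ) :
    ∫ ω, (f ω - τ ω) ^ 2 ∂P = ∫ ω, (f ω ^ 2 - 2 * (f ω * Γ ω)) ∂P + ∫ ω, τ ω ^ 2 ∂P := by
  have hτ2 : MemLp τ 2 P := (hΓ.condExp one_le_two).ae_eq hτ
  have hfτ : Integrable (fun ω => f ω * τ ω) P := hf.integrable_mul hτ2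
  have hloss : Integrable (fun ω => f ω ^ 2 - 2 * (f ω * τ ω)) P :=
    hf.integrable_sq.sub (hfτ.const_mul 2)
  have hfΓ : Integrable (fun ω => f ω * Γ ω) P := hf.integrable_mul hΓ
  have cross : ∫ ω, f ω * τ ω ∂P = ∫ ω, f ω * Γ ω ∂P :=
    (integral_congr_ae (hτ.mono fun ω h => by simp only [h])).symm.trans
      (integral_mul_condExp_of_aestronglyMeasurable hm hfm hfΓ (hΓ.integrable one_le_two))
  calc ∫ ω, (f ω - τ ω) ^ 2 ∂P
      = ∫ ω, (f ω ^ 2 - 2 * (f ω * τ ω) + τ ω ^ 2) ∂P := by congr with ω; ring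
    _ = ∫ ω, f ω ^ 2 ∂P - 2 * ∫ ω, f ω * τ ω ∂P + ∫ ω, τ ω ^ 2 ∂P := by
        rw [integral_add hloss hτ2.integrable_sq,
          integral_sub hf.integrable_sq (hfτ.const_mul 2), integral_const_mul]
    _ = ∫ ω, (f ω ^ 2 - 2 * (f ω * Γ ω)) ∂P + ∫ ω, τ ω ^ 2 ∂P := by
        rw [cross, integral_sub hf.integrable_sq (hfΓ.const_mul 2), integral_const_mul]

lemma integral_relative_error_eq_of_condExp_ae_eq (hm : m ≤ mΩ)
    (hfm : AEStronglyMeasurable[m] f P) (hgm : AEStronglyMeasurable[m] g P)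
    (hf : MemLp f 2 P) (hg : MemLp g 2 P) (hΓ : MemLp Γ 2 P) (hτ : P[Γ | m] =ᵐ[P] τ) :
    ∫ ω, (f ω ^ 2 - g ω ^ 2 - 2 * (f ω - g ω) * Γ ω) ∂P
      = ∫ ω, (f ω - τ ω) ^ 2 ∂P - ∫ ω, (g ω - τ ω) ^ 2 ∂P := by
  have integrable_loss {h : Ω → ℝ} (hh : MemLp h 2 P) :
      Integrable (fun ω => h ω ^ 2 - 2 * (h ω * Γ ω)) P :=
    hh.integrable_sq.sub ((hh.integrable_mul hΓ).const_mul 2)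
  rw [integral_sub_sq_eq_of_condExp_ae_eq hm hfm hf hΓ hτ,
    integral_sub_sq_eq_of_condExp_ae_eq hm hgm hg hΓ hτ, add_sub_add_right_eq_sub,
    ← integral_sub (integrable_loss hf) (integrable_loss hg)]
  congr with ω
  ring

end SquaredError

section AugmentedOutcome

/-- The augmented inverse-probability-weighted outcome of a single treatment arm with indicator `D`,
for an outcome regression `ν` and a propensity `q` of that arm. -/
noncomputable def aipwArm {Ω : Type*} (D Y ν q : Ω → ℝ) : Ω → ℝ :=
  q⁻¹ * (D * (Y - ν)) + ν

/-- The AIPW pseudo-outcome `Γ̃` of the treatment effect, for outcome regressions `ν₀`, `ν₁` and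
a propensity `q`. All nuisances are functions on `Ω`, standing for `ν₀(X)`, `ν₁(X)`, `q(X)`. -/
noncomputable def aipwPseudoOutcome {Ω : Type*} (W Y ν₀ ν₁ q : Ω → ℝ) (ω : Ω) : ℝ :=
  W ω * (Y ω - ν₁ ω) / q ω + ν₁ ω - (1 - W ω) * (Y ω - ν₀ ω) / (1 - q ω) - ν₀ ω

lemma aipwPseudoOutcome_eq_sub {Ω : Type*} (W Y ν₀ ν₁ q : Ω → ℝ) :
    aipwPseudoOutcome W Y ν₀ ν₁ q = aipwArm W Y ν₁ q - aipwArm (1 - W) Y ν₀ (1 - q) := by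
  ext ω
  simp only [aipwPseudoOutcome, aipwArm, Pi.add_apply, Pi.sub_apply, Pi.mul_apply, Pi.inv_apply,
    Pi.one_apply]
  ring

variable {Ω : Type*} {m mΩ : MeasurableSpace Ω} {P : Measure Ω} {D Y p q μ ν : Ω → ℝ}

lemma memLp_aipwArm {r : ENNReal} (hD : MemLp D ⊤ P) (hY : MemLp Y r P) (hν : MemLp ν r P)
    (hq : MemLp q⁻¹ ⊤ P) : MemLp (aipwArm D Y ν q) r P :=
  (((hY.sub hν).mul (r := r) hD).mul (r := r) hq).add hν

variable [IsFiniteMeasure P]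

lemma condExp_mul_sub_ae_eq (hD : MemLp D ⊤ P) (hY : Integrable Y P) (hν : Integrable ν P)
    (hνm : AEStronglyMeasurable[m] ν P) (hp : P[D | m] =ᵐ[P] p)
    (hpμ : P[D * Y | m] =ᵐ[P] p * μ) :
    P[D * (Y - ν) | m] =ᵐ[P] p * (μ - ν) := by
  have hDY : Integrable (D * Y) P := hD.integrable_mul (memLp_one_iff_integrable.2 hY)
  have hDν : Integrable (D * ν) P := hD.integrable_mul (memLp_one_iff_integrable.2 hν)
  have pull_out : P[D * ν | m] =ᵐ[P] P[D | m] * ν :=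
    condExp_mul_of_aestronglyMeasurable_right hνm hDν (hD.integrable le_top)
  rw [mul_sub, mul_sub]
  exact (condExp_sub hDY hDν m).trans (hpμ.sub (pull_out.trans (hp.mul .rfl)))

lemma condExp_aipwArm_ae_eq (hm : m ≤ mΩ) (hD : MemLp D ⊤ P) (hY : Integrable Y P)
    (hν : Integrable ν P) (hνm : AEStronglyMeasurable[m] ν P) (hq : MemLp q⁻¹ ⊤ P)
    (hqm : AEStronglyMeasurable[m] q P) (hp : P[D | m] =ᵐ[P] p)
    (hpμ : P[D * Y | m] =ᵐ[P] p * μ) :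
    P[aipwArm D Y ν q | m] =ᵐ[P] q⁻¹ * (p * (μ - ν)) + ν := by
  have hres : Integrable (D * (Y - ν)) P :=
    hD.integrable_mul (memLp_one_iff_integrable.2 (hY.sub hν))
  have hwres : Integrable (q⁻¹ * (D * (Y - ν))) P :=
    hq.integrable_mul (memLp_one_iff_integrable.2 hres)
  have pull_out : P[q⁻¹ * (D * (Y - ν)) | m] =ᵐ[P] q⁻¹ * P[D * (Y - ν) | m] :=
    condExp_mul_of_aestronglyMeasurable_left hqm.inv₀ hwres hres
  exact (condExp_add hwres hν m).trans
    ((pull_out.trans (.mul .rfl (condExp_mul_sub_ae_eq hD hY hν hνm hp hpμ))).add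
      (condExp_of_aestronglyMeasurable' hm hνm hν))

lemma condExp_aipwArm_ae_eq_of_or (hm : m ≤ mΩ) (hD : MemLp D ⊤ P) (hY : Integrable Y P)
    (hν : Integrable ν P) (hνm : AEStronglyMeasurable[m] ν P) (hq : MemLp q⁻¹ ⊤ P)
    (hqm : AEStronglyMeasurable[m] q P) (hq0 : ∀ᵐ ω ∂P, q ω ≠ 0) (hp : P[D | m] =ᵐ[P] p)
    (hpμ : P[D * Y | m] =ᵐ[P] p * μ) (hdr : ∀ᵐ ω ∂P, q ω = p ω ∨ ν ω = μ ω) :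
    P[aipwArm D Y ν q | m] =ᵐ[P] μ := by
  filter_upwards [condExp_aipwArm_ae_eq hm hD hY hν hνm hq hqm hp hpμ, hq0, hdr]
    with ω hcond hq0 hdr
  rw [hcond]
  simp only [Pi.add_apply, Pi.mul_apply, Pi.inv_apply, Pi.sub_apply]
  rcases hdr with hqp | hνμ
  · rw [← hqp, inv_mul_cancel_left₀ hq0, sub_add_cancel]
  · rw [hνμ, sub_self, mul_zero, mul_zero, zero_add]

end AugmentedOutcome

section DoubleRobustness

variable {Ω : Type*} {m mΩ : MeasurableSpace Ω} {P : Measure Ω}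
  {W Y e μ₀ μ₁ ν₀ ν₁ q : Ω → ℝ} {η : ℝ}

lemma memLp_top_inv_of_le (hq : AEStronglyMeasurable q P) (hη : 0 < η)
    (hηq : ∀ᵐ ω ∂P, η ≤ q ω) : MemLp q⁻¹ ⊤ P := by
  refine memLp_top_of_bound hq.inv₀ η⁻¹ (hηq.mono fun ω h => ?_)
  rw [Pi.inv_apply, norm_inv, Real.norm_of_nonneg (hη.le.trans h)]
  exact inv_anti₀ hη h

lemma memLp_aipwPseudoOutcome {r : ENNReal} (hW : MemLp W ⊤ P) (hY : MemLp Y r P)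
    (hν₀ : MemLp ν₀ r P) (hν₁ : MemLp ν₁ r P) (hq : MemLp q⁻¹ ⊤ P) (hq' : MemLp (1 - q)⁻¹ ⊤ P) :
    MemLp (aipwPseudoOutcome W Y ν₀ ν₁ q) r P := by
  rw [aipwPseudoOutcome_eq_sub]
  exact (memLp_aipwArm hW hY hν₁ hq).sub
    (memLp_aipwArm ((memLp_top_const 1).sub hW) hY hν₀ hq')

variable [IsFiniteMeasure P]

lemma condExp_one_sub_ae_eq (hm : m ≤ mΩ) (hW : Integrable W P) (he : P[W | m] =ᵐ[P] e) :
    P[1 - W | m] =ᵐ[P] 1 - e :=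
  (condExp_sub (integrable_const 1) hW m).trans
    (.sub (by rw [condExp_const hm]; rfl) he)

lemma condExp_aipwPseudoOutcome_ae_eq (hm : m ≤ mΩ) (hW : MemLp W ⊤ P) (hY : Integrable Y P)
    (he : P[W | m] =ᵐ[P] e) (hμ₁ : P[W * Y | m] =ᵐ[P] e * μ₁)
    (hμ₀ : P[(1 - W) * Y | m] =ᵐ[P] (1 - e) * μ₀)
    (hν₀m : AEStronglyMeasurable[m] ν₀ P) (hν₁m : AEStronglyMeasurable[m] ν₁ P)
    (hqm : AEStronglyMeasurable[m] q P) (hν₀ : Integrable ν₀ P) (hν₁ : Integrable ν₁ P)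
    (hq : MemLp q⁻¹ ⊤ P) (hq' : MemLp (1 - q)⁻¹ ⊤ P)
    (hq01 : ∀ᵐ ω ∂P, q ω ≠ 0 ∧ 1 - q ω ≠ 0)
    (hdr : ∀ᵐ ω ∂P, q ω = e ω ∨ (ν₀ ω = μ₀ ω ∧ ν₁ ω = μ₁ ω)) :
    P[aipwPseudoOutcome W Y ν₀ ν₁ q | m] =ᵐ[P] μ₁ - μ₀ := by
  have hW' : MemLp (1 - W) ⊤ P := (memLp_const 1).sub hW
  have integrable_arm {D ν q : Ω → ℝ} (hD : MemLp D ⊤ P) (hν : Integrable ν P)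
      (hq : MemLp q⁻¹ ⊤ P) : Integrable (aipwArm D Y ν q) P :=
    memLp_one_iff_integrable.1 (memLp_aipwArm hD (memLp_one_iff_integrable.2 hY)
      (memLp_one_iff_integrable.2 hν) hq)
  have treated : P[aipwArm W Y ν₁ q | m] =ᵐ[P] μ₁ :=
    condExp_aipwArm_ae_eq_of_or hm hW hY hν₁ hν₁m hq hqm (hq01.mono fun _ h => h.1) he hμ₁
      (hdr.mono fun _ h => h.imp_right And.right)
  have control : P[aipwArm (1 - W) Y ν₀ (1 - q) | m] =ᵐ[P] μ₀ :=
    condExp_aipwArm_ae_eq_of_or hm hW' hY hν₀ hν₀m hq' (aestronglyMeasurable_const.sub hqm)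
      (hq01.mono fun _ h => h.2) (condExp_one_sub_ae_eq hm (hW.integrable le_top) he) hμ₀
      (hdr.mono fun _ h => h.imp (congrArg (fun x : ℝ => 1 - x)) And.left)
  rw [aipwPseudoOutcome_eq_sub]
  exact (condExp_sub (integrable_arm hW hν₁ hq) (integrable_arm hW' hν₀ hq') m).trans
    (treated.sub control)

theorem relative_error_globally_doubly_robust_general {f g : Ω → ℝ} (hm : m ≤ mΩ)
    (hW : MemLp W ⊤ P) (hY : MemLp Y 2 P)
    (he : P[W | m] =ᵐ[P] e) (hμ₁ : P[W * Y | m] =ᵐ[P] e * μ₁)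
    (hμ₀ : P[(1 - W) * Y | m] =ᵐ[P] (1 - e) * μ₀)
    (hν₀m : AEStronglyMeasurable[m] ν₀ P) (hν₁m : AEStronglyMeasurable[m] ν₁ P)
    (hqm : AEStronglyMeasurable[m] q P) (hν₀ : MemLp ν₀ 2 P) (hν₁ : MemLp ν₁ 2 P)
    (hη : 0 < η) (hqη : ∀ᵐ ω ∂P, η ≤ q ω ∧ q ω ≤ 1 - η)
    (hdr : ∀ᵐ ω ∂P, q ω = e ω ∨ (ν₀ ω = μ₀ ω ∧ ν₁ ω = μ₁ ω))
    (hfm : AEStronglyMeasurable[m] f P) (hgm : AEStronglyMeasurable[m] g P)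
    (hf : MemLp f 2 P) (hg : MemLp g 2 P) :
    ∫ ω, (f ω ^ 2 - g ω ^ 2 - 2 * (f ω - g ω) * aipwPseudoOutcome W Y ν₀ ν₁ q ω) ∂P
      = ∫ ω, (f ω - (μ₁ ω - μ₀ ω)) ^ 2 ∂P - ∫ ω, (g ω - (μ₁ ω - μ₀ ω)) ^ 2 ∂P := by
  have hq_le : ∀ᵐ ω ∂P, η ≤ (1 - q) ω := hqη.mono fun _ h => le_sub_comm.1 h.2
  have hq_inv : MemLp q⁻¹ ⊤ P := memLp_top_inv_of_le (hqm.mono hm) hη (hqη.mono fun _ h => h.1)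
  have hq_inv' : MemLp (1 - q)⁻¹ ⊤ P :=
    memLp_top_inv_of_le (aestronglyMeasurable_const.sub (hqm.mono hm)) hη hq_le
  have hq01 : ∀ᵐ ω ∂P, q ω ≠ 0 ∧ 1 - q ω ≠ 0 := by
    filter_upwards [hqη, hq_le] with ω h h'
    exact ⟨(hη.trans_le h.1).ne', (hη.trans_le h').ne'⟩
  exact integral_relative_error_eq_of_condExp_ae_eq hm hfm hgm hf hg
    (memLp_aipwPseudoOutcome hW hY hν₀ hν₁ hq_inv hq_inv')
    (condExp_aipwPseudoOutcome_ae_eq hm hW (hY.integrable one_le_two) he hμ₁ hμ₀ hν₀m hν₁m hqm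
      (hν₀.integrable one_le_two) (hν₁.integrable one_le_two) hq_inv hq_inv' hq01 hdr)

end DoubleRobustness

section Covariates

variable {Ω 𝒳 : Type*} {mΩ : MeasurableSpace Ω} {m𝒳 : MeasurableSpace 𝒳} {P : Measure Ω}
  {X : Ω → 𝒳} {h : 𝒳 → ℝ}

lemma aestronglyMeasurable_comap_comp (hh : Measurable h) :
    AEStronglyMeasurable[m𝒳.comap X] (fun ω => h (X ω)) P :=
  (hh.comp (comap_measurable X)).aestronglyMeasurable

lemma memLp_comp_of_abs_le [IsFiniteMeasure P] {r : ENNReal} {C : ℝ} (hX : Measurable X)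
    (hh : Measurable h) (hC : ∀ x, |h x| ≤ C) : MemLp (fun ω => h (X ω)) r P :=
  .of_bound (hh.comp hX).aestronglyMeasurable C (.of_forall fun ω => hC (X ω))

end Covariates

/-- Global double robustness of the one-step relative error estimator: if either
`ẽ(X) = e(X)` a.s., or both `μ̃₀(X) = μ₀(X)` and `μ̃₁(X) = μ₁(X)` a.s., then the one-step
relative error estimand `E[τ̂₁(X)² − τ̂₂(X)² − 2(τ̂₁(X) − τ̂₂(X))·Γ̃]` equals
`δ(τ̂₁, τ̂₂) = φ(τ̂₁) − φ(τ̂₂)`, even if the other nuisance estimator is arbitrary. -/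
theorem relative_error_globally_doubly_robust
    {Ω 𝒳 : Type*} [MeasurableSpace Ω] [m𝒳 : MeasurableSpace 𝒳]
    (P : Measure Ω) [IsProbabilityMeasure P]
    (X : Ω → 𝒳) (W Y : Ω → ℝ)
    (hX : Measurable X) (hW : Measurable W) (hY : Measurable Y)
    (hW01 : ∀ᵐ ω ∂P, W ω = 0 ∨ W ω = 1)
    (M : ℝ) (hM : 0 < M) (hYb : ∀ᵐ ω ∂P, |Y ω| ≤ M)
    (e μ₀ μ₁ : 𝒳 → ℝ)
    (he : Measurable e) (hμ₀ : Measurable μ₀) (hμ₁ : Measurable μ₁)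
    (C₀ C₁ : ℝ) (hμ₀b : ∀ x, |μ₀ x| ≤ C₀) (hμ₁b : ∀ x, |μ₁ x| ≤ C₁)
    (η : ℝ) (hη₀ : 0 < η) (hη₁ : η < 1/2)
    (heb : ∀ x, η ≤ e x ∧ e x ≤ 1 - η)
    (hce : P[W | m𝒳.comap X] =ᵐ[P] fun ω => e (X ω))
    (hc1 : P[fun ω => W ω * Y ω | m𝒳.comap X] =ᵐ[P] fun ω => e (X ω) * μ₁ (X ω))
    (hc0 : P[fun ω => (1 - W ω) * Y ω | m𝒳.comap X]
        =ᵐ[P] fun ω => (1 - e (X ω)) * μ₀ (X ω))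
    (μt₀ μt₁ et : 𝒳 → ℝ)
    (hμt₀ : Measurable μt₀) (hμt₁ : Measurable μt₁) (het : Measurable et)
    (Ct₀ Ct₁ : ℝ) (hμt₀b : ∀ x, |μt₀ x| ≤ Ct₀) (hμt₁b : ∀ x, |μt₁ x| ≤ Ct₁)
    (η' : ℝ) (hη'₀ : 0 < η') (hη'₁ : η' < 1/2)
    (hetb : ∀ x, η' ≤ et x ∧ et x ≤ 1 - η')
    (hdr : (∀ᵐ ω ∂P, et (X ω) = e (X ω))
        ∨ ((∀ᵐ ω ∂P, μt₀ (X ω) = μ₀ (X ω)) ∧ (∀ᵐ ω ∂P, μt₁ (X ω) = μ₁ (X ω)))) :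
    ∀ (τhat₁ τhat₂ : 𝒳 → ℝ) (B₁ B₂ : ℝ), Measurable τhat₁ → Measurable τhat₂ →
      (∀ x, |τhat₁ x| ≤ B₁) → (∀ x, |τhat₂ x| ≤ B₂) →
      ∫ ω, (τhat₁ (X ω) ^ 2 - τhat₂ (X ω) ^ 2
          - 2 * (τhat₁ (X ω) - τhat₂ (X ω))
            * (W ω * (Y ω - μt₁ (X ω)) / et (X ω) + μt₁ (X ω)
              - (1 - W ω) * (Y ω - μt₀ (X ω)) / (1 - et (X ω)) - μt₀ (X ω))) ∂P
        = (∫ ω, (τhat₁ (X ω) - (μ₁ (X ω) - μ₀ (X ω))) ^ 2 ∂P)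
          - ∫ ω, (τhat₂ (X ω) - (μ₁ (X ω) - μ₀ (X ω))) ^ 2 ∂P := by
  intro τhat₁ τhat₂ B₁ B₂ hτ₁ hτ₂ hB₁ hB₂
  have hW_bdd : ∀ᵐ ω ∂P, ‖W ω‖ ≤ 1 := hW01.mono fun ω h => by rcases h with h | h <;> simp [h]
  have hdr_pointwise : ∀ᵐ ω ∂P, et (X ω) = e (X ω)
      ∨ (μt₀ (X ω) = μ₀ (X ω) ∧ μt₁ (X ω) = μ₁ (X ω)) :=
    hdr.elim (fun h => h.mono fun _ => .inl) fun h => (h.1.and h.2).mono fun _ => .inr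
  exact relative_error_globally_doubly_robust_general hX.comap_le
    (memLp_top_of_bound hW.aestronglyMeasurable 1 hW_bdd)
    (.of_bound hY.aestronglyMeasurable M hYb) hce hc1 hc0
    (aestronglyMeasurable_comap_comp hμt₀) (aestronglyMeasurable_comap_comp hμt₁)
    (aestronglyMeasurable_comap_comp het)
    (memLp_comp_of_abs_le hX hμt₀ hμt₀b) (memLp_comp_of_abs_le hX hμt₁ hμt₁b)
    hη'₀ (.of_forall fun ω => hetb (X ω)) hdr_pointwise
    (aestronglyMeasurable_comap_comp hτ₁) (aestronglyMeasurable_comap_comp hτ₂)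
    (memLp_comp_of_abs_le hX hτ₁ hB₁) (memLp_comp_of_abs_le hX hτ₂ hB₂)
end

section
/- Exact bias identity for the one-step absolute error estimator with estimated nuisance functions: for any bounded measurable τ̂ : 𝒳 → ℝ, writing Δ := μ₁ − μ₀, Δ̃ := μ̃₁ − μ̃₀, and R̃ := W(Y − μ̃₁(X))/ẽ(X) − (1−W)(Y − μ̃₀(X))/(1−ẽ(X)), one has E[(Δ̃(X) − τ̂(X))² + 2(Δ̃(X) − τ̂(X))·R̃] − φ(τ̂) = −E[(Δ(X) − Δ̃(X))²] + 2·E[(Δ̃(X) − τ̂(X))·r(X)], where r(x) := (e(x)/ẽ(x) − 1)(μ₁(x) − μ̃₁(x)) − ((1−e(x))/(1−ẽ(x)) − 1)(μ₀(x) − μ̃₀(x)). -/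
open MeasureTheory ProbabilityTheory

/-!
Given `X`, the inverse-propensity-weighted residual `R̃` has conditional mean
`s(X) = e/ẽ · (μ₁ - μ̃₁) - (1 - e)/(1 - ẽ) · (μ₀ - μ̃₀) = (Δ - Δ̃) + r`, so the tower property
replaces `R̃` by `s(X)` against any function of `X`. The identity is then the pointwise polarization
`(Δ̃ - τ̂)² + 2 (Δ̃ - τ̂)(Δ - Δ̃) = (τ̂ - Δ)² - (Δ - Δ̃)²`.
-/

section

open scoped ENNReal

variable {Ω : Type*} {m mΩ : MeasurableSpace Ω} {P : Measure Ω}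

theorem integral_mul_eq_integral_mul_condExp (hm : m ≤ mΩ) [SigmaFinite (P.trim hm)]
    {f g : Ω → ℝ} (hf : Measurable[m] f) (hfg : Integrable (fun ω => f ω * g ω) P)
    (hg : Integrable g P) :
    ∫ ω, f ω * g ω ∂P = ∫ ω, f ω * P[g | m] ω ∂P :=
  (integral_condExp hm).symm.trans <|
    integral_congr_ae (condExp_mul_of_stronglyMeasurable_left hf.stronglyMeasurable hfg hg)

theorem integrable_mul_condExp {f g : Ω → ℝ} (hf : Measurable[m] f)
    (hfg : Integrable (fun ω => f ω * g ω) P) (hg : Integrable g P) :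
    Integrable (fun ω => f ω * P[g | m] ω) P :=
  integrable_condExp.congr (condExp_mul_of_stronglyMeasurable_left hf.stronglyMeasurable hfg hg)

theorem condExp_one_sub (hm : m ≤ mΩ) [IsFiniteMeasure P] {W e : Ω → ℝ} (hW : Integrable W P)
    (he : P[W | m] =ᵐ[P] e) : P[fun ω => 1 - W ω | m] =ᵐ[P] fun ω => 1 - e ω := by
  have hsub := condExp_sub (integrable_const (1 : ℝ)) hW m
  rw [condExp_const hm] at hsub
  filter_upwards [hsub, he] with ω hsubω heω
  rw [← heω]
  exact hsubω

theorem condExp_mul_sub_div {W Y e μ μt et : Ω → ℝ} (hW : Integrable W P)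
    (hWY : Integrable (fun ω => W ω * Y ω) P) (hWμt : Integrable (fun ω => W ω * μt ω) P)
    (hres : Integrable (fun ω => W ω * (Y ω - μt ω) / et ω) P)
    (hμt : Measurable[m] μt) (het : Measurable[m] et)
    (he : P[W | m] =ᵐ[P] e) (hμ : P[fun ω => W ω * Y ω | m] =ᵐ[P] fun ω => e ω * μ ω) :
    P[fun ω => W ω * (Y ω - μt ω) / et ω | m] =ᵐ[P] fun ω => e ω / et ω * (μ ω - μt ω) := by
  have hsplit : (fun ω => W ω * (Y ω - μt ω)) = (fun ω => W ω * Y ω) - fun ω => W ω * μt ω := by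
    funext ω
    exact mul_sub _ _ _
  have hresidual : Integrable (fun ω => W ω * (Y ω - μt ω)) P := hsplit ▸ hWY.sub hWμt
  simp only [div_eq_mul_inv] at hres ⊢
  have hpull_weight := condExp_mul_of_stronglyMeasurable_right het.inv.stronglyMeasurable
    hres hresidual
  have hpull_μt := condExp_mul_of_stronglyMeasurable_right hμt.stronglyMeasurable hWμt hW
  have hsub := condExp_sub hWY hWμt m
  rw [← hsplit] at hsub
  filter_upwards [hpull_weight, hsub, hpull_μt, he, hμ] with ω hweightω hsubω hμtω heω hμω
  calc P[fun ω => W ω * (Y ω - μt ω) * (et ω)⁻¹ | m] ω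
      = P[fun ω => W ω * (Y ω - μt ω) | m] ω * (et ω)⁻¹ := hweightω
    _ = (P[fun ω => W ω * Y ω | m] ω - P[fun ω => W ω * μt ω | m] ω) * (et ω)⁻¹ :=
        congrArg (· * (et ω)⁻¹) hsubω
    _ = (e ω * μ ω - e ω * μt ω) * (et ω)⁻¹ := by
        rw [hμω, ← heω]
        exact congrArg (fun z => (_ - z) * (et ω)⁻¹) hμtω
    _ = e ω * (et ω)⁻¹ * (μ ω - μt ω) := by ring

theorem memLp_top_of_ae_eq_zero_or_one {W : Ω → ℝ} (hW : AEStronglyMeasurable W P)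
    (hW01 : ∀ᵐ ω ∂P, W ω = 0 ∨ W ω = 1) : MemLp W ∞ P := by
  refine memLp_top_of_bound hW 1 ?_
  filter_upwards [hW01] with ω hω
  rcases hω with hω | hω <;> simp [hω]

theorem memLp_comp_of_abs_le_s10 [IsFiniteMeasure P] {𝒳 : Type*} [MeasurableSpace 𝒳] {p : ℝ≥0∞}
    {X : Ω → 𝒳} {f : 𝒳 → ℝ} {C : ℝ} (hX : Measurable X) (hf : Measurable f)
    (hfC : ∀ x, |f x| ≤ C) : MemLp (fun ω => f (X ω)) p P :=
  .of_bound (hf.comp hX).aestronglyMeasurable C (.of_forall fun ω => hfC (X ω))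

theorem memLp_top_inv_of_le_s10 {f : Ω → ℝ} {c : ℝ} (hf : AEMeasurable f P) (hc : 0 < c)
    (hcf : ∀ᵐ ω ∂P, c ≤ f ω) : MemLp (fun ω => (f ω)⁻¹) ∞ P := by
  refine memLp_top_of_bound hf.inv.aestronglyMeasurable c⁻¹ ?_
  filter_upwards [hcf] with ω hcω
  rw [norm_inv, Real.norm_of_nonneg (hc.le.trans hcω)]
  exact inv_anti₀ hc hcω

theorem memLp_mul_sub_div {p : ℝ≥0∞} {W Y μt et : Ω → ℝ} {c : ℝ} (hW : MemLp W ∞ P)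
    (hY : MemLp Y p P) (hμt : MemLp μt p P) (het : AEMeasurable et P) (hc : 0 < c)
    (hcet : ∀ᵐ ω ∂P, c ≤ et ω) : MemLp (fun ω => W ω * (Y ω - μt ω) / et ω) p P := by
  simp only [div_eq_mul_inv]
  have hresidual : MemLp (fun ω => W ω * (Y ω - μt ω)) p P := (hY.sub hμt).mul' hW
  exact (memLp_top_inv_of_le_s10 het hc hcet).mul' hresidual

theorem integrable_mul_sub_div {W Y μt et : Ω → ℝ} {c : ℝ} (hW : MemLp W ∞ P)
    (hY : Integrable Y P) (hμt : Integrable μt P) (het : AEMeasurable et P) (hc : 0 < c)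
    (hcet : ∀ᵐ ω ∂P, c ≤ et ω) : Integrable (fun ω => W ω * (Y ω - μt ω) / et ω) P := by
  rw [← memLp_one_iff_integrable] at hY hμt ⊢
  exact memLp_mul_sub_div hW hY hμt het hc hcet

theorem condExp_mul_sub_div_of_memLp_top [IsFiniteMeasure P] (hm : m ≤ mΩ)
    {W Y e μ μt et : Ω → ℝ} {c : ℝ}
    (hW : MemLp W ∞ P) (hY : Integrable Y P) (hμt : Integrable μt P)
    (hμt_meas : Measurable[m] μt) (het : Measurable[m] et) (hc : 0 < c)
    (hcet : ∀ᵐ ω ∂P, c ≤ et ω) (he : P[W | m] =ᵐ[P] e)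
    (hμ : P[fun ω => W ω * Y ω | m] =ᵐ[P] fun ω => e ω * μ ω) :
    P[fun ω => W ω * (Y ω - μt ω) / et ω | m] =ᵐ[P] fun ω => e ω / et ω * (μ ω - μt ω) := by
  have hresidual := integrable_mul_sub_div hW hY hμt (het.mono hm le_rfl).aemeasurable hc hcet
  rw [← memLp_one_iff_integrable] at hY hμt
  exact condExp_mul_sub_div (hW.integrable le_top) (memLp_one_iff_integrable.1 (hY.mul' hW))
    (memLp_one_iff_integrable.1 (hμt.mul' hW)) hresidual hμt_meas het he hμ

theorem integral_add_sq {f g : Ω → ℝ} (hf : MemLp f 2 P) (hg : MemLp g 2 P) :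
    ∫ ω, (f ω + g ω) ^ 2 ∂P
      = ∫ ω, f ω ^ 2 ∂P + 2 * ∫ ω, f ω * g ω ∂P + ∫ ω, g ω ^ 2 ∂P := by
  have hfg : Integrable (fun ω => 2 * (f ω * g ω)) P := (hf.integrable_mul hg).const_mul 2
  have hf_add : Integrable (fun ω => f ω ^ 2 + 2 * (f ω * g ω)) P := hf.integrable_sq.add hfg
  simp only [add_sq, mul_assoc]
  rw [integral_add hf_add hg.integrable_sq, integral_add hf.integrable_sq hfg,
    integral_const_mul]

theorem one_step_bias_eq_of_condExp_eq [IsFiniteMeasure P] (hm : m ≤ mΩ)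
    {Δ Δt τ R r : Ω → ℝ} (hΔ : MemLp Δ 2 P) (hΔt : MemLp Δt 2 P) (hτ : MemLp τ 2 P)
    (hR : MemLp R 2 P) (hD_meas : Measurable[m] fun ω => Δt ω - τ ω)
    (hcond : P[R | m] =ᵐ[P] fun ω => (Δ ω - Δt ω) + r ω) :
    (∫ ω, ((Δt ω - τ ω) ^ 2 + 2 * (Δt ω - τ ω) * R ω) ∂P) - ∫ ω, (τ ω - Δ ω) ^ 2 ∂P
      = -(∫ ω, (Δ ω - Δt ω) ^ 2 ∂P) + 2 * ∫ ω, (Δt ω - τ ω) * r ω ∂P := by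
  have hD : MemLp (fun ω => Δt ω - τ ω) 2 P := hΔt.sub hτ
  have hR_int : Integrable R P := hR.integrable one_le_two
  have hDR : Integrable (fun ω => (Δt ω - τ ω) * R ω) P := hD.integrable_mul hR
  have hDcond : (fun ω => (Δt ω - τ ω) * P[R | m] ω)
      =ᵐ[P] fun ω => (Δt ω - τ ω) * ((Δ ω - Δt ω) + r ω) :=
    hcond.mono fun ω hω => congrArg ((Δt ω - τ ω) * ·) hω
  have htower : ∫ ω, (Δt ω - τ ω) * R ω ∂P
      = ∫ ω, (Δt ω - τ ω) * ((Δ ω - Δt ω) + r ω) ∂P :=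
    (integral_mul_eq_integral_mul_condExp hm hD_meas hDR hR_int).trans (integral_congr_ae hDcond)
  have hDs : Integrable (fun ω => (Δt ω - τ ω) * ((Δ ω - Δt ω) + r ω)) P :=
    (integrable_mul_condExp hD_meas hDR hR_int).congr hDcond
  have hE : MemLp (fun ω => Δ ω - Δt ω) 2 P := hΔ.sub hΔt
  have hDE : Integrable (fun ω => (Δt ω - τ ω) * (Δ ω - Δt ω)) P := hD.integrable_mul hE
  have hDr : Integrable (fun ω => (Δt ω - τ ω) * r ω) P :=
    (hDs.sub hDE).congr (.of_forall fun ω => by simp only [Pi.sub_apply]; ring)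
  have hpolarize : ∫ ω, (τ ω - Δ ω) ^ 2 ∂P = ∫ ω, (Δt ω - τ ω) ^ 2 ∂P
      + 2 * ∫ ω, (Δt ω - τ ω) * (Δ ω - Δt ω) ∂P + ∫ ω, (Δ ω - Δt ω) ^ 2 ∂P := by
    rw [← integral_add_sq hD hE]
    exact integral_congr_ae (.of_forall fun ω => by ring)
  simp only [mul_assoc]
  rw [integral_add hD.integrable_sq (hDR.const_mul 2), integral_const_mul, htower, hpolarize]
  simp only [mul_add]
  rw [integral_add hDE hDr]
  ring

/-- The inverse-propensity-weighted residual `R̃` that corrects the plug-in contrast `μ̃₁ - μ̃₀`.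
The nuisance estimates are random variables: in the application they are functions of `X`. -/
noncomputable def ipwResidual (W Y μt₀ μt₁ et : Ω → ℝ) (ω : Ω) : ℝ :=
  W ω * (Y ω - μt₁ ω) / et ω - (1 - W ω) * (Y ω - μt₀ ω) / (1 - et ω)

/-- The remainder `r` of the one-step correction: propensity error times outcome-regression error,
summed with signs over the two treatment arms. -/
noncomputable def productRemainder (e μ₀ μ₁ μt₀ μt₁ et : Ω → ℝ) (ω : Ω) : ℝ :=
  (e ω / et ω - 1) * (μ₁ ω - μt₁ ω) - ((1 - e ω) / (1 - et ω) - 1) * (μ₀ ω - μt₀ ω)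

theorem memLp_ipwResidual {p : ℝ≥0∞} {W Y μt₀ μt₁ et : Ω → ℝ} {c : ℝ}
    (hW : MemLp W ∞ P) (hY : MemLp Y p P) (hμt₀ : MemLp μt₀ p P) (hμt₁ : MemLp μt₁ p P)
    (het : AEMeasurable et P) (hc : 0 < c) (hcet : ∀ᵐ ω ∂P, c ≤ et ω ∧ et ω ≤ 1 - c) :
    MemLp (ipwResidual W Y μt₀ μt₁ et) p P :=
  (memLp_mul_sub_div hW hY hμt₁ het hc (hcet.mono fun _ h => h.1)).sub
    (memLp_mul_sub_div ((memLp_top_const 1).sub hW) hY hμt₀ (aemeasurable_const.sub het) hc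
      (hcet.mono fun _ h => le_sub_comm.1 h.2))

theorem condExp_ipwResidual [IsFiniteMeasure P] (hm : m ≤ mΩ)
    {W Y e μ₀ μ₁ μt₀ μt₁ et : Ω → ℝ} {c : ℝ}
    (hW : MemLp W ∞ P) (hY : Integrable Y P) (hμt₀ : Integrable μt₀ P) (hμt₁ : Integrable μt₁ P)
    (hμt₀_meas : Measurable[m] μt₀) (hμt₁_meas : Measurable[m] μt₁) (het : Measurable[m] et)
    (hc : 0 < c) (hcet : ∀ᵐ ω ∂P, c ≤ et ω ∧ et ω ≤ 1 - c)
    (he : P[W | m] =ᵐ[P] e) (hμ₁ : P[fun ω => W ω * Y ω | m] =ᵐ[P] fun ω => e ω * μ₁ ω)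
    (hμ₀ : P[fun ω => (1 - W ω) * Y ω | m] =ᵐ[P] fun ω => (1 - e ω) * μ₀ ω) :
    P[ipwResidual W Y μt₀ μt₁ et | m] =ᵐ[P] fun ω =>
      ((μ₁ ω - μ₀ ω) - (μt₁ ω - μt₀ ω)) + productRemainder e μ₀ μ₁ μt₀ μt₁ et ω := by
  have hW' : MemLp (fun ω => 1 - W ω) ∞ P := (memLp_top_const 1).sub hW
  have het' : Measurable[m] fun ω => 1 - et ω := measurable_const.sub het
  have hcet₁ : ∀ᵐ ω ∂P, c ≤ et ω := hcet.mono fun _ h => h.1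
  have hcet₀ : ∀ᵐ ω ∂P, c ≤ 1 - et ω := hcet.mono fun _ h => le_sub_comm.1 h.2
  have htreated := condExp_mul_sub_div_of_memLp_top hm hW hY hμt₁ hμt₁_meas het hc hcet₁ he hμ₁
  have hcontrol := condExp_mul_sub_div_of_memLp_top hm hW' hY hμt₀ hμt₀_meas het' hc hcet₀
    (condExp_one_sub hm (hW.integrable le_top) he) hμ₀
  have hsub := condExp_sub
    (integrable_mul_sub_div hW hY hμt₁ (het.mono hm le_rfl).aemeasurable hc hcet₁)
    (integrable_mul_sub_div hW' hY hμt₀ (het'.mono hm le_rfl).aemeasurable hc hcet₀) m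
  filter_upwards [hsub, htreated, hcontrol] with ω hsubω htreatedω hcontrolω
  refine hsubω.trans ?_
  rw [Pi.sub_apply, htreatedω, hcontrolω, productRemainder]
  ring

end

open scoped ENNReal in
theorem absolute_error_one_step_bias_identity_general
    {Ω 𝒳 : Type*} [MeasurableSpace Ω] [m𝒳 : MeasurableSpace 𝒳]
    {P : Measure Ω} [IsFiniteMeasure P] {X : Ω → 𝒳} {W Y : Ω → ℝ} (hX : Measurable X)
    (hW : MemLp W ∞ P) (hY : MemLp Y 2 P) {e μ₀ μ₁ : 𝒳 → ℝ}
    (hμ : MemLp (fun ω => μ₁ (X ω) - μ₀ (X ω)) 2 P)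
    (hce : P[W | m𝒳.comap X] =ᵐ[P] fun ω => e (X ω))
    (hc1 : P[fun ω => W ω * Y ω | m𝒳.comap X] =ᵐ[P] fun ω => e (X ω) * μ₁ (X ω))
    (hc0 : P[fun ω => (1 - W ω) * Y ω | m𝒳.comap X]
        =ᵐ[P] fun ω => (1 - e (X ω)) * μ₀ (X ω))
    {μt₀ μt₁ et τhat : 𝒳 → ℝ} (hμt₀_meas : Measurable μt₀) (hμt₁_meas : Measurable μt₁)
    (het : Measurable et) (hτ_meas : Measurable τhat)
    (hμt₀ : MemLp (fun ω => μt₀ (X ω)) 2 P) (hμt₁ : MemLp (fun ω => μt₁ (X ω)) 2 P)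
    (hτ : MemLp (fun ω => τhat (X ω)) 2 P)
    {η' : ℝ} (hη' : 0 < η') (hetb : ∀ᵐ ω ∂P, η' ≤ et (X ω) ∧ et (X ω) ≤ 1 - η') :
    (∫ ω, (((μt₁ (X ω) - μt₀ (X ω)) - τhat (X ω)) ^ 2
        + 2 * ((μt₁ (X ω) - μt₀ (X ω)) - τhat (X ω))
          * (W ω * (Y ω - μt₁ (X ω)) / et (X ω)
            - (1 - W ω) * (Y ω - μt₀ (X ω)) / (1 - et (X ω)))) ∂P)
      - (∫ ω, (τhat (X ω) - (μ₁ (X ω) - μ₀ (X ω))) ^ 2 ∂P)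
      = -(∫ ω, ((μ₁ (X ω) - μ₀ (X ω)) - (μt₁ (X ω) - μt₀ (X ω))) ^ 2 ∂P)
        + 2 * ∫ ω, ((μt₁ (X ω) - μt₀ (X ω)) - τhat (X ω))
            * ((e (X ω) / et (X ω) - 1) * (μ₁ (X ω) - μt₁ (X ω))
              - ((1 - e (X ω)) / (1 - et (X ω)) - 1) * (μ₀ (X ω) - μt₀ (X ω))) ∂P := by
  have hcomap {f : 𝒳 → ℝ} (hf : Measurable f) : Measurable[m𝒳.comap X] fun ω => f (X ω) :=
    hf.comp (comap_measurable X)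
  have hresidual := memLp_ipwResidual hW hY hμt₀ hμt₁ (het.comp hX).aemeasurable hη' hetb
  have hcond := condExp_ipwResidual hX.comap_le hW (hY.integrable one_le_two)
    (hμt₀.integrable one_le_two) (hμt₁.integrable one_le_two) (hcomap hμt₀_meas)
    (hcomap hμt₁_meas) (hcomap het) hη' hetb hce hc1 hc0
  exact one_step_bias_eq_of_condExp_eq hX.comap_le hμ (hμt₁.sub hμt₀) hτ hresidual
    (hcomap ((hμt₁_meas.sub hμt₀_meas).sub hτ_meas)) hcond

/-- Exact bias identity for the one-step absolute error estimator with estimated nuisance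
functions: with `Δ := μ₁ − μ₀`, `Δ̃ := μ̃₁ − μ̃₀` and
`R̃ := W(Y − μ̃₁(X))/ẽ(X) − (1−W)(Y − μ̃₀(X))/(1−ẽ(X))`, one has
`E[(Δ̃(X) − τ̂(X))² + 2(Δ̃(X) − τ̂(X))·R̃] − φ(τ̂)
  = −E[(Δ(X) − Δ̃(X))²] + 2·E[(Δ̃(X) − τ̂(X))·r(X)]`. -/
theorem absolute_error_one_step_bias_identity
    {Ω 𝒳 : Type*} [MeasurableSpace Ω] [m𝒳 : MeasurableSpace 𝒳]
    (P : Measure Ω) [IsProbabilityMeasure P]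
    (X : Ω → 𝒳) (W Y : Ω → ℝ)
    (hX : Measurable X) (hW : Measurable W) (hY : Measurable Y)
    (hW01 : ∀ᵐ ω ∂P, W ω = 0 ∨ W ω = 1)
    (M : ℝ) (hM : 0 < M) (hYb : ∀ᵐ ω ∂P, |Y ω| ≤ M)
    (e μ₀ μ₁ : 𝒳 → ℝ)
    (he : Measurable e) (hμ₀ : Measurable μ₀) (hμ₁ : Measurable μ₁)
    (C₀ C₁ : ℝ) (hμ₀b : ∀ x, |μ₀ x| ≤ C₀) (hμ₁b : ∀ x, |μ₁ x| ≤ C₁)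
    (η : ℝ) (hη₀ : 0 < η) (hη₁ : η < 1/2)
    (heb : ∀ x, η ≤ e x ∧ e x ≤ 1 - η)
    (hce : P[W | m𝒳.comap X] =ᵐ[P] fun ω => e (X ω))
    (hc1 : P[fun ω => W ω * Y ω | m𝒳.comap X] =ᵐ[P] fun ω => e (X ω) * μ₁ (X ω))
    (hc0 : P[fun ω => (1 - W ω) * Y ω | m𝒳.comap X]
        =ᵐ[P] fun ω => (1 - e (X ω)) * μ₀ (X ω))
    (μt₀ μt₁ et : 𝒳 → ℝ)
    (hμt₀ : Measurable μt₀) (hμt₁ : Measurable μt₁) (het : Measurable et)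
    (Ct₀ Ct₁ : ℝ) (hμt₀b : ∀ x, |μt₀ x| ≤ Ct₀) (hμt₁b : ∀ x, |μt₁ x| ≤ Ct₁)
    (η' : ℝ) (hη'₀ : 0 < η') (hη'₁ : η' < 1/2)
    (hetb : ∀ x, η' ≤ et x ∧ et x ≤ 1 - η') :
    ∀ (τhat : 𝒳 → ℝ) (B : ℝ), Measurable τhat → (∀ x, |τhat x| ≤ B) →
      (∫ ω, (((μt₁ (X ω) - μt₀ (X ω)) - τhat (X ω)) ^ 2
          + 2 * ((μt₁ (X ω) - μt₀ (X ω)) - τhat (X ω))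
            * (W ω * (Y ω - μt₁ (X ω)) / et (X ω)
              - (1 - W ω) * (Y ω - μt₀ (X ω)) / (1 - et (X ω)))) ∂P)
        - (∫ ω, (τhat (X ω) - (μ₁ (X ω) - μ₀ (X ω))) ^ 2 ∂P)
        = -(∫ ω, ((μ₁ (X ω) - μ₀ (X ω)) - (μt₁ (X ω) - μt₀ (X ω))) ^ 2 ∂P)
          + 2 * ∫ ω, ((μt₁ (X ω) - μt₀ (X ω)) - τhat (X ω))
              * ((e (X ω) / et (X ω) - 1) * (μ₁ (X ω) - μt₁ (X ω))
                - ((1 - e (X ω)) / (1 - et (X ω)) - 1) * (μ₀ (X ω) - μt₀ (X ω))) ∂P := by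
  intro τhat B hτ hτb
  exact absolute_error_one_step_bias_identity_general hX
    (memLp_top_of_ae_eq_zero_or_one hW.aestronglyMeasurable hW01)
    (.of_bound hY.aestronglyMeasurable M hYb)
    ((memLp_comp_of_abs_le_s10 hX hμ₁ hμ₁b).sub (memLp_comp_of_abs_le_s10 hX hμ₀ hμ₀b))
    hce hc1 hc0 hμt₀ hμt₁ het hτ (memLp_comp_of_abs_le_s10 hX hμt₀ hμt₀b)
    (memLp_comp_of_abs_le_s10 hX hμt₁ hμt₁b) (memLp_comp_of_abs_le_s10 hX hτ hτb)
    hη'₀ (.of_forall fun ω => hetb (X ω))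
end
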